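/- Let d ≥ 2 and let f, g : ℝ^d → ℝ be integrable. Suppose that for every nonzero vector v ∈ ℝ^d and Lebesgue-almost every z ∈ ℝ^d one has ∫_ℝ f(z + t v) dt = ∫_ℝ g(z + t v) dt (both integrals being finite for a.e. z). Then f = g almost everywhere. In other words, an integrable function on ℝ^d, d ≥ 2, is uniquely determined by its X-ray transform (its integrals over all straight lines). -/

import Mathlib

open MeasureTheory

open scoped FourierTransform ContDiff in
theorem aux_inj {d : ℕ} (F : EuclideanSpace ℝ (Fin d) → ℂ) (hF : Integrable F)
    (h : ∀ w, 𝓕 F w = 0) : ∀ᵐ x, F x = 0 := by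
  apply ae_eq_zero_of_integral_contDiff_smul_eq_zero hF.locallyIntegrable
  intro g hg hc
  have hc' : HasCompactSupport (fun x => (g x : ℂ)) := hc.comp_left (g := fun r : ℝ => (r : ℂ)) (by simp)
  have hg' : ContDiff ℝ ∞ (fun x => (g x : ℂ)) := Complex.ofRealCLM.contDiff.comp hg
  let φ : SchwartzMap (EuclideanSpace ℝ (Fin d)) ℂ := hc'.toSchwartzMap hg'
  let θ : SchwartzMap (EuclideanSpace ℝ (Fin d)) ℂ := 𝓕⁻ φ
  have h1 := VectorFourier.integral_fourierIntegral_smul_eq_flip (L := innerₗ (EuclideanSpace ℝ (Fin d)))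
      Real.continuous_fourierChar continuous_inner hF θ.integrable (μ := volume) (ν := volume)
  have h2 : ∀ x, VectorFourier.fourierIntegral Real.fourierChar volume
      (innerₗ (EuclideanSpace ℝ (Fin d))) F x = 0 := h
  have h3 : ∀ x, VectorFourier.fourierIntegral Real.fourierChar volume
      (innerₗ (EuclideanSpace ℝ (Fin d))).flip θ x = (g x : ℂ) := by
    intro x
    rw [flip_innerₗ]
    change 𝓕 (⇑θ) x = _
    rw [← SchwartzMap.fourier_coe, show 𝓕 θ = φ from FourierTransform.fourier_fourierInv_eq φ]
    rfl
  simp only [h2, h3, zero_smul, integral_zero] at h1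
  rw [h1]
  congr 1
  ext x
  simp [mul_comm]

theorem aux_slice {d : ℕ} (G : EuclideanSpace ℝ (Fin d) → ℂ) (hG : Integrable G)
    (v : EuclideanSpace ℝ (Fin d)) (hv : inner ℝ v v = 1) (ψ : ℝ → ℂ) (hψ : Integrable ψ)
    (hψ1 : ∫ s, ψ s = 1) :
    ∫ x, G x = ∫ z, ψ (inner ℝ z v) * ∫ t : ℝ, G (z + t • v) := by
  have hA : MeasurePreserving (fun p : ℝ × EuclideanSpace ℝ (Fin d) => (p.1, p.2 + p.1 • v))
      (volume.prod volume) (volume.prod volume) := by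
    refine (MeasurePreserving.id volume).skew_product (g := fun t z => z + t • v) ?_ ?_
    · change Measurable (fun p : ℝ × EuclideanSpace ℝ (Fin d) => p.2 + p.1 • v)
      fun_prop
    · exact Filter.Eventually.of_forall fun t => map_add_right_eq_self _ _
  have hB : MeasurePreserving (fun p : EuclideanSpace ℝ (Fin d) × ℝ => (p.1, inner ℝ p.1 v - p.2))
      (volume.prod volume) (volume.prod volume) := by
    refine (MeasurePreserving.id volume).skew_product (g := fun x t => inner ℝ x v - t) ?_ ?_
    · change Measurable (fun p : EuclideanSpace ℝ (Fin d) × ℝ => inner ℝ p.1 v - p.2)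
      fun_prop
    · exact Filter.Eventually.of_forall fun x =>
        (Measure.measurePreserving_sub_left volume (inner ℝ x v)).map_eq
  have hT := (hB.comp Measure.measurePreserving_swap).comp
    (hA.comp (Measure.measurePreserving_swap (μ := (volume : Measure (EuclideanSpace ℝ (Fin d))))))
  have hP : Integrable (fun p : EuclideanSpace ℝ (Fin d) × ℝ => G p.1 * ψ p.2)
      (volume.prod volume) := hG.mul_prod hψ
  have hPT := hT.integrable_comp_of_integrable hP
  have e1 : ∫ p : EuclideanSpace ℝ (Fin d) × ℝ, G p.1 * ψ p.2 ∂(volume.prod volume) = ∫ x, G x := by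
    rw [integral_prod_mul, hψ1, mul_one]
  rw [← e1]
  have e2 := hT.map_eq
  conv_lhs => rw [← e2]
  rw [integral_map hT.aemeasurable (by rw [e2]; exact hP.1)]
  refine (integral_prod _ hPT).trans ?_
  congr 1
  ext z
  rw [← integral_const_mul]
  congr 1
  ext t
  have e3 : (inner ℝ (z + t • v) v : ℝ) - t = inner ℝ z v := by
    rw [inner_add_left, real_inner_smul_left, hv]
    ring
  change G (z + t • v) * ψ (inner ℝ (z + t • v) v - t) = _
  rw [e3, mul_comm]

theorem aux_perp {d : ℕ} (hd : 2 ≤ d) (w : EuclideanSpace ℝ (Fin d)) :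
    ∃ v : EuclideanSpace ℝ (Fin d), inner ℝ v v = (1 : ℝ) ∧ inner ℝ v w = (0 : ℝ) := by
  have h1 : (Submodule.span ℝ {w})ᗮ ≠ ⊥ := by
    intro h
    have h2 := Submodule.finrank_add_finrank_orthogonal (Submodule.span ℝ {w})
    have h3 := finrank_span_le_card (R := ℝ) ({w} : Set (EuclideanSpace ℝ (Fin d)))
    simp only [Set.toFinset_singleton, Finset.card_singleton] at h3
    rw [h] at h2
    simp at h2
    omega
  obtain ⟨u, hu, hu0⟩ := Submodule.exists_mem_ne_zero_of_ne_bot h1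
  rw [Submodule.mem_orthogonal_singleton_iff_inner_left] at hu
  have hn : ‖u‖ ≠ 0 := by simpa using hu0
  refine ⟨‖u‖⁻¹ • u, ?_, ?_⟩
  · rw [real_inner_self_eq_norm_sq, norm_smul]
    simp [hn]
  · rw [inner_smul_left, hu, mul_zero]

open scoped FourierTransform in
theorem aux_fourier {d : ℕ} (f : EuclideanSpace ℝ (Fin d) → ℝ) (hf : Integrable f)
    (w v : EuclideanSpace ℝ (Fin d)) (hv : inner ℝ v v = (1 : ℝ)) (hw : inner ℝ v w = (0 : ℝ))
    (ψ : ℝ → ℂ) (hψ : Integrable ψ) (hψ1 : ∫ s, ψ s = 1) :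
    𝓕 (fun x => (f x : ℂ)) w = ∫ z, ψ (inner ℝ z v) *
      (((Real.fourierChar (-(inner ℝ z w)) : Circle) : ℂ) * ((∫ t : ℝ, f (z + t • v) : ℝ) : ℂ)) := by
  have hf' : Integrable (fun x => (f x : ℂ)) := hf.ofReal
  rw [Real.fourier_eq]
  refine (aux_slice _ ((Real.fourierIntegral_convergent_iff w).2 hf') v hv ψ hψ hψ1).trans ?_
  congr 1
  ext z
  congr 1
  rw [← integral_complex_ofReal, ← integral_const_mul]
  congr 1
  ext t
  simp [inner_add_left, inner_smul_left, hw, Circle.smul_def]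

open scoped FourierTransform in
/-- An integrable function on `ℝ^d`, `d ≥ 2`, is uniquely determined (a.e.) by
its X-ray transform: if `f` and `g` are integrable and for every nonzero
direction `v` their integrals over almost every line with direction `v`
coincide, then `f = g` almost everywhere. -/
theorem xray_transform_injective {d : ℕ} (hd : 2 ≤ d)
    (f g : EuclideanSpace ℝ (Fin d) → ℝ)
    (hf : Integrable f) (hg : Integrable g)
    (h : ∀ v : EuclideanSpace ℝ (Fin d), v ≠ 0 →
      ∀ᵐ z : EuclideanSpace ℝ (Fin d),
        (∫ t : ℝ, f (z + t • v)) = ∫ t : ℝ, g (z + t • v)) :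
    f =ᵐ[volume] g := by
  have hψ : Integrable (Set.indicator (Set.Icc (0 : ℝ) 1) (fun _ => (1 : ℂ))) := by
    rw [integrable_indicator_iff measurableSet_Icc]
    exact integrableOn_const (by simp)
  have hψ1 : ∫ s, Set.indicator (Set.Icc (0 : ℝ) 1) (fun _ => (1 : ℂ)) s = 1 := by
    rw [integral_indicator measurableSet_Icc]
    simp
  have key := aux_inj (fun x => (f x : ℂ) - (g x : ℂ)) (hf.ofReal.sub hg.ofReal) (by
    intro w
    obtain ⟨v, hv, hvw⟩ := aux_perp hd w
    have hv0 : v ≠ 0 := by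
      rintro rfl
      simp at hv
    have e : 𝓕 (fun x => (f x : ℂ)) w = 𝓕 (fun x => (g x : ℂ)) w := by
      rw [aux_fourier f hf w v hv hvw _ hψ hψ1, aux_fourier g hg w v hv hvw _ hψ hψ1]
      apply integral_congr_ae
      filter_upwards [h v hv0] with z hz
      rw [hz]
    rw [Real.fourier_eq] at e ⊢
    rw [Real.fourier_eq] at e
    simp only [smul_sub]
    rw [integral_sub, e, sub_self]
    · exact (Real.fourierIntegral_convergent_iff w).2 hf.ofReal
    · exact (Real.fourierIntegral_convergent_iff w).2 hg.ofReal)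
  filter_upwards [key] with x hx
  exact_mod_cast sub_eq_zero.1 hx
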